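/- Let X be a real Hilbert space, Q : X → X a bounded self-adjoint positive operator with bounded inverse Q⁻¹, f₀ ∈ X, and let G₀ = {f ∈ X : ⟪Q(f − f₀), f − f₀⟫ ≤ 1}. Then for every z ∈ X, the infimum over c ∈ ℝ of the supremum over f ∈ G₀ of (⟪f, z⟫ + c)² equals ⟪Q⁻¹z, z⟫, and this infimum is attained at c = −⟪f₀, z⟫. -/

import Mathlib

local notation "⟪" x ", " y "⟫" => @inner ℝ _ _ x y

/-- For `Q` a bounded self-adjoint positive operator with bounded inverse on a real
Hilbert space `X`, `f₀ ∈ X`, and `G₀ = {f : ⟪Q(f - f₀), f - f₀⟫ ≤ 1}`, the infimum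
over `c ∈ ℝ` of the supremum over `f ∈ G₀` of `(⟪f, z⟫ + c)²` equals `⟪Q⁻¹z, z⟫`,
attained at `c = -⟪f₀, z⟫`. -/
theorem inf_sup_over_ellipsoid
    {X : Type*} [NormedAddCommGroup X] [InnerProductSpace ℝ X] [CompleteSpace X]
    (Q Qinv : X →L[ℝ] X)
    (hQsa : ∀ x y : X, ⟪Q x, y⟫ = ⟪x, Q y⟫)
    (hQpos : ∀ x : X, 0 ≤ ⟪Q x, x⟫)
    (hinv₁ : ∀ x : X, Q (Qinv x) = x)
    (hinv₂ : ∀ x : X, Qinv (Q x) = x)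
    (f₀ z : X) :
    sSup {y : ℝ | ∃ f : X, ⟪Q (f - f₀), f - f₀⟫ ≤ 1 ∧ y = (⟪f, z⟫ + (-⟪f₀, z⟫)) ^ 2}
        = ⟪Qinv z, z⟫ ∧
    ∀ c : ℝ, ⟪Qinv z, z⟫ ≤
        sSup {y : ℝ | ∃ f : X, ⟪Q (f - f₀), f - f₀⟫ ≤ 1 ∧ y = (⟪f, z⟫ + c) ^ 2} := by
  have hs : 0 ≤ ⟪Qinv z, z⟫ := by
    have h := hQpos (Qinv z)
    rwa [hinv₁, real_inner_comm] at h
  have hCS : ∀ g : X, ⟪Q g, g⟫ ≤ 1 → ⟪g, z⟫ ^ 2 ≤ ⟪Qinv z, z⟫ := by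
    intro g hg
    have key : ∀ t : ℝ, 0 ≤ ⟪Qinv z, z⟫ * (t * t) + (-2 * ⟪g, z⟫) * t + ⟪Q g, g⟫ := by
      intro t
      have h := hQpos (g - t • Qinv z)
      have h1 : ⟪Q g, Qinv z⟫ = ⟪g, z⟫ := by rw [hQsa, hinv₁]
      have h2 : ⟪z, g⟫ = ⟪g, z⟫ := real_inner_comm _ _
      have h3 : ⟪z, Qinv z⟫ = ⟪Qinv z, z⟫ := real_inner_comm _ _
      simp only [map_sub, map_smul, hinv₁, inner_sub_left, inner_sub_right,
        real_inner_smul_left, real_inner_smul_right, h1, h2, h3] at h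
      linarith
    have hd := discrim_le_zero key
    unfold discrim at hd
    nlinarith
  obtain ⟨r, hr0, hr⟩ : ∃ r : ℝ, 0 ≤ r ∧ r ^ 2 = ⟪Qinv z, z⟫ :=
    ⟨_, Real.sqrt_nonneg _, Real.sq_sqrt hs⟩
  obtain ⟨g, hg1, hg2⟩ : ∃ g : X, ⟪Q g, g⟫ ≤ 1 ∧ ⟪g, z⟫ = r := by
    have h3 : ⟪z, Qinv z⟫ = r ^ 2 := by rw [real_inner_comm, hr]
    refine ⟨r⁻¹ • Qinv z, ?_, ?_⟩
    · simp only [map_smul, hinv₁, real_inner_smul_left, real_inner_smul_right, h3]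
      rcases eq_or_ne r 0 with h | h
      · simp [h]
      · apply le_of_eq
        field_simp
    · rw [real_inner_smul_left, ← hr]
      rcases eq_or_ne r 0 with h | h
      · simp [h]
      · field_simp
  have hbdd : ∀ c : ℝ, BddAbove
      {y : ℝ | ∃ f : X, ⟪Q (f - f₀), f - f₀⟫ ≤ 1 ∧ y = (⟪f, z⟫ + c) ^ 2} := by
    intro c
    refine ⟨2 * ⟪Qinv z, z⟫ + 2 * (⟪f₀, z⟫ + c) ^ 2, ?_⟩
    rintro y ⟨f, hf, rfl⟩
    have h := hCS _ hf
    rw [inner_sub_left] at h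
    nlinarith [sq_nonneg (⟪f, z⟫ - ⟪f₀, z⟫ - (⟪f₀, z⟫ + c))]
  have hlow : ∀ c : ℝ, ⟪Qinv z, z⟫ ≤
      sSup {y : ℝ | ∃ f : X, ⟪Q (f - f₀), f - f₀⟫ ≤ 1 ∧ y = (⟪f, z⟫ + c) ^ 2} := by
    intro c
    rcases le_total 0 (⟪f₀, z⟫ + c) with h | h
    · refine le_trans ?_ (le_csSup (hbdd c) ⟨f₀ + g, by simpa using hg1, rfl⟩)
      rw [inner_add_left, hg2, ← hr]
      nlinarith [mul_nonneg hr0 h]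
    · refine le_trans ?_ (le_csSup (hbdd c) ⟨f₀ - g, by simpa using hg1, rfl⟩)
      rw [inner_sub_left, hg2, ← hr]
      nlinarith [mul_nonneg hr0 (neg_nonneg.mpr h)]
  refine ⟨le_antisymm ?_ (hlow _), hlow⟩
  refine csSup_le ⟨_, f₀, by simp, rfl⟩ ?_
  rintro y ⟨f, hf, rfl⟩
  have h := hCS _ hf
  rwa [inner_sub_left, sub_eq_add_neg] at h
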